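/- Let p be a prime, let m ≥ 2 be a divisor of p−1 and n ≥ 2 a divisor of p+1, and set m_0 = (p−1)/m, n_0 = (p+1)/n, α = n_0(p−1), β = m_0(p+1). Let T = {(i, j) ∈ ℕ² : 0 ≤ iα ≤ jβ ≤ p²−1 and C(jβ, iα) ≢ 0 (mod p)}. Then #T − (m + n + gcd(m, n)) = 2·Σ_{j=⌈m/2⌉}^{m} ⌊(j·m_0 + 1)/n_0⌋ − (m − ⌈m/2⌉ + 2)(n − 1) + 1 − gcd(m, n). -/

import Mathlib

/-!
By Lucas's theorem, `p ∤ C(k, l)` for `k < p²` means that the two base-`p` digits of `l` are bounded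
by those of `k`. Both digits of `jβ = jm₀(p+1)` are `r = jm₀`, while for `0 < s ≤ p` the digits of
`s(p-1)` are `s - 1` and `p - s`; so, with `s = in₀`, the point `(i, j)` lies in `T` exactly when
`p - r ≤ s ≤ r + 1`, that is, `n - f ≤ i ≤ f` with `f = ⌊(jm₀+1)/n₀⌋`. This forces
`m/2 ≤ j`, and for every such `j` one has `n ≤ 2f + 1`, so that the row holds exactly `2f + 1 - n`
such points. The remaining points of `T` are the `m + 1` points `(0, j)` and the corner `(n, m)`.
-/

open Finset

section Lucas

variable {p : ℕ}

lemma le_of_not_dvd_choose {k l : ℕ} (h : ¬ p ∣ k.choose l) : l ≤ k :=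
  Nat.choose_ne_zero_iff.mp fun h₀ => h (h₀ ▸ dvd_zero p)

lemma not_dvd_choose_iff_le_of_lt (hp : p.Prime) {k l : ℕ} (hk : k < p) :
    ¬ p ∣ k.choose l ↔ l ≤ k := by
  refine ⟨le_of_not_dvd_choose, fun hl hdvd => hk.not_ge ?_⟩
  rw [← hp.dvd_factorial, ← Nat.choose_mul_factorial_mul_factorial hl, mul_assoc]
  exact hdvd.mul_right _

lemma not_dvd_choose_two_digits_iff (hp : p.Prime) {a b u v : ℕ}
    (ha : a < p) (hb : b < p) (hv : v < p) :
    ¬ p ∣ (p * a + b).choose (p * u + v) ↔ u ≤ a ∧ v ≤ b := by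
  have : Fact p.Prime := ⟨hp⟩
  have lucas : (p * a + b).choose (p * u + v) ≡ b.choose v * a.choose u [MOD p] := by
    simpa only [Nat.mul_add_mod, Nat.mod_eq_of_lt hb, Nat.mod_eq_of_lt hv, Nat.mul_add_div hp.pos,
      Nat.div_eq_of_lt hb, Nat.div_eq_of_lt hv, add_zero] using
      Choose.choose_modEq_choose_mod_mul_choose_div_nat
        (n := p * a + b) (k := p * u + v) (p := p)
  rw [lucas.dvd_iff dvd_rfl, hp.dvd_mul, not_or, not_dvd_choose_iff_le_of_lt hp hb,
    not_dvd_choose_iff_le_of_lt hp ha, and_comm]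

lemma not_dvd_choose_mul_succ_mul_pred_iff (hp : p.Prime) {r s : ℕ} (hr : r < p) :
    ¬ p ∣ (r * (p + 1)).choose (s * (p - 1)) ↔
      s = 0 ∨ (s = p + 1 ∧ r = p - 1) ∨ (p ≤ s + r ∧ s ≤ r + 1) := by
  have hp1 := hp.one_lt
  rw [show r * (p + 1) = p * r + r by ring]
  rcases Nat.eq_zero_or_pos s with rfl | hs
  · simp [hp.ne_one]
  rcases lt_trichotomy s (p + 1) with hsp | rfl | hsp
  · have digits : s * (p - 1) = p * (s - 1) + (p - s) := by
      zify [hp1.le, Nat.lt_succ_iff.mp hsp, Nat.one_le_iff_ne_zero.mpr hs.ne']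
      ring
    rw [digits, not_dvd_choose_two_digits_iff hp hr hr (by omega)]
    omega
  · have digits : (p + 1) * (p - 1) = p * (p - 1) + (p - 1) := by ring
    rw [digits, not_dvd_choose_two_digits_iff hp hr hr (by omega)]
    omega
  · have too_large : p * r + r < s * (p - 1) := calc
      p * r + r = (p + 1) * r := by ring
      _ ≤ (p + 1) * (p - 1) := Nat.mul_le_mul_left _ (by omega)
      _ < s * (p - 1) := Nat.mul_lt_mul_of_pos_right hsp (by omega)
    exact iff_of_false (fun h => (le_of_not_dvd_choose h).not_gt too_large) (by omega)

end Lucas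

section Band

lemma sub_div_le_iff {a d i n : ℕ} (hd : 0 < d) : n - a / d ≤ i ↔ n * d ≤ i * d + a := by
  rw [tsub_le_iff_left, ← tsub_le_iff_right, Nat.le_div_iff_mul_le hd, Nat.sub_mul,
    tsub_le_iff_left]

lemma le_two_mul_div_add_one {a d n : ℕ} (hd : 0 < d) (h : n * d ≤ 2 * a) :
    n ≤ 2 * (a / d) + 1 := by
  have half : n / 2 ≤ a / d := by
    rw [Nat.le_div_iff_mul_le hd]
    nlinarith [Nat.div_mul_le_self n 2]
  omega

variable {m n m0 n0 : ℕ}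

/-- The points `(i, j)` with `⌈m/2⌉ ≤ j ≤ m` and `n - f ≤ i ≤ f`, where `f = ⌊(j m0 + 1) / n0⌋`.
When `m m0 = p - 1` and `n n0 = p + 1`, these are the points of `T` other than the corner `(n, m)`
and the `(0, j)`. -/
def band (m n m0 n0 : ℕ) : Finset (ℕ × ℕ) :=
  (Icc ((m + 1) / 2) m).biUnion fun j =>
    Icc (n - (j * m0 + 1) / n0) ((j * m0 + 1) / n0) ×ˢ {j}

lemma mem_band_iff (hm0 : 0 < m0) (h : n * n0 = m * m0 + 2) {i j : ℕ} :
    (i, j) ∈ band m n m0 n0 ↔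
      j ≤ m ∧ n * n0 ≤ i * n0 + (j * m0 + 1) ∧ i * n0 ≤ j * m0 + 1 := by
  have hn0 : 0 < n0 := Nat.pos_of_ne_zero (by rintro rfl; simp at h)
  have half_le (h₁ : n * n0 ≤ i * n0 + (j * m0 + 1)) (h₂ : i * n0 ≤ j * m0 + 1) :
      m ≤ 2 * j := by
    refine Nat.le_of_mul_le_mul_right (c := m0) ?_ hm0
    linarith
  simp only [band, mem_biUnion, mem_product, mem_singleton, mem_Icc, sub_div_le_iff hn0,
    Nat.le_div_iff_mul_le hn0]
  constructor
  · rintro ⟨j, hj, hi, rfl⟩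
    exact ⟨hj.2, hi⟩
  · rintro ⟨hj, h₁, h₂⟩
    have := half_le h₁ h₂
    exact ⟨j, ⟨by omega, hj⟩, ⟨h₁, h₂⟩, rfl⟩

lemma card_insert_union_band (hm0 : 0 < m0) (h : n * n0 = m * m0 + 2) :
    #(insert (n, m) ({0} ×ˢ range (m + 1) ∪ band m n m0 n0)) = m + 2 + #(band m n m0 n0) := by
  have corner_notMem : (n, m) ∉ ({0} ×ˢ range (m + 1) ∪ band m n m0 n0 : Finset (ℕ × ℕ)) := by
    have : n ≠ 0 := by rintro rfl; simp at h
    simp only [mem_union, mem_product, mem_singleton, mem_band_iff hm0 h]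
    omega
  have disjoint_band : Disjoint ({0} ×ˢ range (m + 1)) (band m n m0 n0) := by
    rw [disjoint_left]
    rintro ⟨i, j⟩ hij hband
    simp only [mem_product, mem_singleton] at hij
    obtain ⟨rfl, -⟩ := hij
    obtain ⟨hj, hge, -⟩ := (mem_band_iff hm0 h).mp hband
    have : j * m0 ≤ m * m0 := Nat.mul_le_mul_right _ hj
    omega
  rw [card_insert_of_notMem corner_notMem, card_union_of_disjoint disjoint_band, card_product,
    card_singleton, card_range]
  ring

lemma card_band (h : n * n0 = m * m0 + 2) :
    (#(band m n m0 n0) : ℤ) =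
      2 * (↑(∑ j ∈ Icc ((m + 1) / 2) m, (j * m0 + 1) / n0) : ℤ)
        - ((m : ℤ) - ((m + 1) / 2 : ℕ) + 1) * ((n : ℤ) - 1) := by
  have hn0 : 0 < n0 := Nat.pos_of_ne_zero (by rintro rfl; simp at h)
  have row {j : ℕ} (hj : j ∈ Icc ((m + 1) / 2) m) :
      ((#(Icc (n - (j * m0 + 1) / n0) ((j * m0 + 1) / n0)) : ℕ) : ℤ) =
        2 * ((j * m0 + 1) / n0 : ℕ) - ((n : ℤ) - 1) := by
    rw [mem_Icc] at hj
    have hm2j : m * m0 ≤ 2 * j * m0 := Nat.mul_le_mul_right _ (by omega)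
    have hjm : j * m0 ≤ m * m0 := Nat.mul_le_mul_right _ hj.2
    have hle : (j * m0 + 1) / n0 ≤ n := Nat.div_le_of_le_mul (by linarith)
    have hge : n ≤ 2 * ((j * m0 + 1) / n0) + 1 := le_two_mul_div_add_one hn0 (by linarith)
    rw [Nat.card_Icc]
    omega
  have rows_disjoint : (Icc ((m + 1) / 2) m : Set ℕ).PairwiseDisjoint fun j =>
      Icc (n - (j * m0 + 1) / n0) ((j * m0 + 1) / n0) ×ˢ {j} := fun j _ k _ hjk =>
    disjoint_product.mpr (Or.inr (disjoint_singleton.mpr hjk))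
  rw [band, card_biUnion (by exact_mod_cast rows_disjoint)]
  simp only [card_product, card_singleton, mul_one, Nat.cast_sum]
  rw [sum_congr rfl fun j hj => row hj, sum_sub_distrib, ← mul_sum, sum_const, Nat.card_Icc,
    nsmul_eq_mul, Nat.cast_sub (by omega)]
  push_cast
  ring

end Band

section LucasPoints

variable {p m n m0 n0 : ℕ}

lemma not_dvd_choose_iff_mem_band (hp : p.Prime) (hm : m * m0 + 1 = p) (hn : n * n0 = p + 1)
    {i j : ℕ} (hj : j ≤ m) :
    ¬ p ∣ (j * (m0 * (p + 1))).choose (i * (n0 * (p - 1))) ↔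
      i = 0 ∨ (i = n ∧ j = m) ∨ (i, j) ∈ band m n m0 n0 := by
  have hp1 := hp.one_lt
  have hm0 : 0 < m0 := Nat.pos_of_ne_zero (by rintro rfl; omega)
  have hn0 : 0 < n0 := Nat.pos_of_ne_zero (by rintro rfl; omega)
  have hjm : j * m0 ≤ m * m0 := Nat.mul_le_mul_right _ hj
  have i_zero : i * n0 = 0 ↔ i = 0 := by simp [hn0.ne']
  have i_top : i * n0 = p + 1 ↔ i = n := by rw [← hn, Nat.mul_left_inj hn0.ne']
  have j_top : j * m0 = p - 1 ↔ j = m := by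
    rw [← hm, Nat.add_sub_cancel, Nat.mul_left_inj hm0.ne']
  rw [← mul_assoc, ← mul_assoc, not_dvd_choose_mul_succ_mul_pred_iff hp (by omega), i_zero, i_top,
    j_top, mem_band_iff hm0 (by omega)]
  omega

lemma mul_le_sq_sub_one_iff (hm0 : 0 < m0) (hm : m * m0 + 1 = p) {j : ℕ} :
    j * (m0 * (p + 1)) ≤ p ^ 2 - 1 ↔ j ≤ m := by
  have top : p ^ 2 - 1 = m * (m0 * (p + 1)) := by
    subst hm
    rw [Nat.sub_eq_of_eq_add]
    ring
  rw [top, Nat.mul_le_mul_right_iff (by positivity)]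

lemma filter_not_dvd_choose_eq (hp : p.Prime) (hm : m * m0 + 1 = p) (hn : n * n0 = p + 1) :
    {ij ∈ range (p ^ 2) ×ˢ range (p ^ 2) |
      ij.1 * (n0 * (p - 1)) ≤ ij.2 * (m0 * (p + 1)) ∧ ij.2 * (m0 * (p + 1)) ≤ p ^ 2 - 1 ∧
        ¬ p ∣ (ij.2 * (m0 * (p + 1))).choose (ij.1 * (n0 * (p - 1)))} =
      insert (n, m) ({0} ×ˢ range (m + 1) ∪ band m n m0 n0) := by
  have hp1 := hp.one_lt
  have hm0 : 0 < m0 := Nat.pos_of_ne_zero (by rintro rfl; omega)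
  have hn0 : 0 < n0 := Nat.pos_of_ne_zero (by rintro rfl; omega)
  have in_box {i j : ℕ} (hi : i ≤ p + 1) (hj : j ≤ m) : i < p ^ 2 ∧ j < p ^ 2 := by
    have : m ≤ m * m0 := Nat.le_mul_of_pos_right _ hm0
    constructor <;> nlinarith
  have n_le : n ≤ p + 1 := hn ▸ Nat.le_mul_of_pos_right _ hn0
  ext ⟨i, j⟩
  simp only [mem_filter, mem_product, mem_insert, mem_union, mem_range, mem_singleton,
    Prod.mk.injEq, mul_le_sq_sub_one_iff hm0 hm]
  constructor
  · rintro ⟨-, -, hj, hdvd⟩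
    have := (not_dvd_choose_iff_mem_band hp hm hn hj).mp hdvd
    grind
  · intro h
    have band_bounds (hb : (i, j) ∈ band m n m0 n0) : i ≤ p + 1 ∧ j ≤ m := by
      obtain ⟨hj, -, hi⟩ := (mem_band_iff hm0 (by omega)).mp hb
      have : i ≤ i * n0 := Nat.le_mul_of_pos_right _ hn0
      have : j * m0 ≤ m * m0 := Nat.mul_le_mul_right _ hj
      omega
    have hi : i ≤ p + 1 := by grind
    have hj : j ≤ m := by grind
    have hdvd := (not_dvd_choose_iff_mem_band hp hm hn (i := i) hj).mpr (by grind)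
    exact ⟨in_box hi hj, le_of_not_dvd_choose hdvd, hj, hdvd⟩

end LucasPoints

/-- Theorem 4.1 (`p+1,p-1`): for `m ∣ p−1`, `n ∣ p+1`, with `m₀ = (p−1)/m`,
`n₀ = (p+1)/n`, `α = n₀(p−1)`, `β = m₀(p+1)`, the cardinality of
`T = {(i,j) : iα ≤ jβ ≤ p²−1, p ∤ C(jβ, iα)}` satisfies
`#T − (m+n+gcd(m,n)) = 2 Σ_{j=⌈m/2⌉}^m ⌊(jm₀+1)/n₀⌋ − (m−⌈m/2⌉+2)(n−1) + 1 − gcd(m,n)`. -/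
theorem stmt_11 (p m n : ℕ) (hp : p.Prime) (hm : 2 ≤ m) (hn : 2 ≤ n)
    (hmd : m ∣ p - 1) (hnd : n ∣ p + 1)
    (m0 n0 α β : ℕ) (hm0 : m0 = (p - 1) / m) (hn0 : n0 = (p + 1) / n)
    (hα : α = n0 * (p - 1)) (hβ : β = m0 * (p + 1)) :
    (((Finset.range (p ^ 2) ×ˢ Finset.range (p ^ 2)).filter
      (fun ij : ℕ × ℕ => ij.1 * α ≤ ij.2 * β ∧ ij.2 * β ≤ p ^ 2 - 1 ∧
        ¬ p ∣ Nat.choose (ij.2 * β) (ij.1 * α))).card : ℤ)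
      - ((m : ℤ) + n + Nat.gcd m n)
    = 2 * (↑(∑ j ∈ Finset.Icc ((m + 1) / 2) m, (j * m0 + 1) / n0) : ℤ)
      - ((m : ℤ) - ((m + 1) / 2 : ℕ) + 2) * ((n : ℤ) - 1) + 1 - Nat.gcd m n := by
  have hmp : m * m0 + 1 = p := by
    rw [hm0, Nat.mul_div_cancel' hmd, Nat.sub_add_cancel hp.one_le]
  have hnp : n * n0 = p + 1 := by rw [hn0, Nat.mul_div_cancel' hnd]
  have hm0_pos : 0 < m0 := Nat.pos_of_ne_zero fun h => hp.ne_one (by simp [← hmp, h])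
  have hmn : n * n0 = m * m0 + 2 := by omega
  subst hα hβ
  rw [filter_not_dvd_choose_eq hp hmp hnp, card_insert_union_band hm0_pos hmn]
  push_cast [card_band hmn]
  ring
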